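/- Let δ ∈ (0,1) and let r_0, r_1, …, r_K be real numbers. Then r_0 ≤ Quantile_{1−δ}(r_1, …, r_K, ∞) if and only if r_0 ≤ Quantile_{1−δ}(r_0, r_1, …, r_K), where Quantile_{1−δ}(r_0, r_1, …, r_K) denotes the p-th smallest value among the K+1 numbers r_0, r_1, …, r_K with p := ⌈(K+1)(1−δ)⌉, and where r_0 ≤ +∞ always holds. -/

import Mathlib

/-!
For `1 ≤ p ≤ n`, the bound `a ≤ r_(p)` on the `p`-th smallest of `n` numbers holds exactly when
fewer than `p` of them lie strictly below `a` (`le_orderStat_iff`). Adjoining `r 0` itself to the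
list does not change the number of entries strictly below `r 0`, so both sides of the equivalence
become the same counting condition. When `p = K + 1` the left side is `r 0 ≤ ∞`, and the counting
condition on the right holds because only `K` entries can lie strictly below `r 0`.
-/


open MeasureTheory

/-- The `p`-th smallest value among the `K` real numbers `r 1, …, r K`. -/
noncomputable def orderStat {K : ℕ} (r : Fin K → ℝ) (p : ℕ) : ℝ :=
  sInf {x : ℝ | p ≤ (Finset.univ.filter fun i => r i ≤ x).card}

/-- `Quantile_α(r 1, …, r K, ∞)`: the `p`-th smallest value among `r 1, …, r K` with
`p := ⌈(K+1)α⌉`, taken to be `+∞` if `p > K`. -/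
noncomputable def quantileInf {K : ℕ} (r : Fin K → ℝ) (α : ℝ) : EReal :=
  if ⌈(K + 1 : ℝ) * α⌉₊ ≤ K then
    ((orderStat r ⌈(K + 1 : ℝ) * α⌉₊ : ℝ) : EReal)
  else ⊤

/-- The bounds on `p` make the set defining `orderStat` bounded below and nonempty, so that its
infimum is not a junk value. -/
lemma le_orderStat_iff {n : ℕ} (r : Fin n → ℝ) {p : ℕ} (hp : 1 ≤ p) (hpn : p ≤ n) (a : ℝ) :
    a ≤ orderStat r p ↔ (Finset.univ.filter fun i => r i < a).card < p := by
  unfold orderStat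
  constructor
  · intro h
    by_contra! hc
    -- The largest entry strictly below `a` already has `p` entries at or below it.
    have hne : (Finset.univ.filter fun i => r i < a).Nonempty :=
      Finset.card_pos.mp (by omega)
    obtain ⟨j, hj, hmax⟩ := Finset.exists_max_image _ r hne
    have hja : r j < a := (Finset.mem_filter.mp hj).2
    have hbdd : BddBelow {x : ℝ | p ≤ (Finset.univ.filter fun i => r i ≤ x).card} := by
      obtain ⟨b, hb⟩ := (Set.finite_range r).bddBelow
      refine ⟨b, fun x hx => ?_⟩
      obtain ⟨i, hi⟩ := Finset.card_pos.mp (lt_of_lt_of_le hp hx)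
      exact (hb ⟨i, rfl⟩).trans (Finset.mem_filter.mp hi).2
    have hmem : r j ∈ {x : ℝ | p ≤ (Finset.univ.filter fun i => r i ≤ x).card} :=
      hc.trans (Finset.card_le_card fun i hi =>
        Finset.mem_filter.mpr ⟨Finset.mem_univ i, hmax i hi⟩)
    exact absurd (h.trans (csInf_le hbdd hmem)) (not_le.mpr hja)
  · intro h
    refine le_csInf ?_ fun x hx => ?_
    · obtain ⟨b, hb⟩ := (Set.finite_range r).bddAbove
      refine ⟨b, ?_⟩
      have hall : (Finset.univ.filter fun i => r i ≤ b) = Finset.univ :=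
        Finset.filter_true_of_mem fun i _ => hb ⟨i, rfl⟩
      simpa [hall] using hpn
    · by_contra! hxa
      have hsub : (Finset.univ.filter fun i => r i ≤ x).card ≤
          (Finset.univ.filter fun i => r i < a).card :=
        Finset.card_le_card (Finset.monotone_filter_right _ fun i _ hi => lt_of_le_of_lt hi hxa)
      exact absurd (hx.trans hsub) (not_le.mpr h)

lemma card_filter_cons_lt_self {K : ℕ} (a : ℝ) (r : Fin K → ℝ) :
    (Finset.univ.filter fun i => (Fin.cons a r : Fin (K + 1) → ℝ) i < a).card =
      (Finset.univ.filter fun i => r i < a).card := by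
  rw [Fin.card_filter_univ_succ]
  simp

/-- `r 0 ≤ Quantile_{1-δ}(r 1, …, r K, ∞)` if and only if
`r 0 ≤ Quantile_{1-δ}(r 0, r 1, …, r K)`, the `⌈(K+1)(1-δ)⌉`-th smallest of the `K+1` numbers. -/
theorem le_quantileInf_iff_le_quantile_augmented
    (K : ℕ) (δ : ℝ) (hδ : δ ∈ Set.Ioo (0 : ℝ) 1) (r0 : ℝ) (r : Fin K → ℝ) :
    ((r0 : EReal) ≤ quantileInf r (1 - δ)) ↔
      r0 ≤ orderStat (Fin.cons r0 r) ⌈(K + 1 : ℝ) * (1 - δ)⌉₊ := by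
  have hp : 1 ≤ ⌈(K + 1 : ℝ) * (1 - δ)⌉₊ :=
    Nat.ceil_pos.mpr (mul_pos (by positivity) (by linarith [hδ.2]))
  have hpK : ⌈(K + 1 : ℝ) * (1 - δ)⌉₊ ≤ K + 1 := by
    refine Nat.ceil_le.mpr ?_
    push_cast
    exact mul_le_of_le_one_right (by positivity) (by linarith [hδ.1])
  rw [le_orderStat_iff _ hp hpK, card_filter_cons_lt_self]
  unfold quantileInf
  split_ifs with h
  · rw [EReal.coe_le_coe_iff, le_orderStat_iff r hp h]
  · have hcard : (Finset.univ.filter fun i => r i < r0).card ≤ K := by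
      simpa using Finset.card_filter_le (Finset.univ : Finset (Fin K)) fun i => r i < r0
    exact iff_of_true le_top (by omega)
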